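/- Let p be a prime, k a positive integer, and let A and B be nonempty subsets of the group (ℤ/(p))^k. Then |A + B| ≥ β_p(|A|, |B|), where β_p(r, s) is the smallest non-negative integer n such that p divides the binomial coefficient C(n, m) for all integers m in the range n - r < m < s. -/

import Mathlib

open Pointwise

/-- `betaP p r s` is the smallest non-negative integer `n` such that `p`
divides the binomial coefficient `C(n, m)` for all integers `m` in the range
`n - r < m < s`. -/
noncomputable def betaP (p r s : ℕ) : ℕ :=
  sInf {n : ℕ | ∀ m : ℕ, (n : ℤ) - (r : ℤ) < (m : ℤ) → m < s → p ∣ n.choose m}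

lemma cd_coeff {F : Type*} [Field F] (T : Finset F) (d : Fin 2 →₀ ℕ)
    (hd : d 0 + d 1 = T.card) :
    (∏ c ∈ T, ((MvPolynomial.X 0 + MvPolynomial.X 1 : MvPolynomial (Fin 2) F)
      - MvPolynomial.C c)).coeff d = (T.card.choose (d 0) : F) := by
  classical
  set L : MvPolynomial (Fin 2) F := MvPolynomial.X 0 + MvPolynomial.X 1 with hL
  set P : Polynomial F := ∏ c ∈ T, (Polynomial.X - Polynomial.C c) with hP
  have hdeg : P.natDegree = T.card := by simp [hP]
  have hmon : P.Monic := Polynomial.monic_prod_of_monic _ _ fun c _ => Polynomial.monic_X_sub_C c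
  have h1 : (∏ c ∈ T, (L - MvPolynomial.C c)) = Polynomial.aeval L P := by
    simp [hP, map_prod, MvPolynomial.algebraMap_eq]
  rw [h1, Polynomial.aeval_eq_sum_range, hdeg, MvPolynomial.coeff_sum,
    Finset.sum_eq_single T.card]
  · have : P.coeff T.card = 1 := by rw [← hdeg]; exact hmon
    rw [this, one_smul, hL, MvPolynomial.coeff_add_pow, if_pos]
    simpa using hd
  · intro j _ hj
    rw [MvPolynomial.coeff_smul, hL, MvPolynomial.coeff_add_pow, if_neg, Nat.cast_zero, smul_zero]
    intro h
    simp at h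
    omega
  · intro h
    simp at h

lemma cd_field {F : Type*} [Field F] [DecidableEq F] (A B T : Finset F)
    (hT : ∀ a ∈ A, ∀ b ∈ B, a + b ∈ T) (i j : ℕ) (hij : i + j = T.card)
    (hi : i < A.card) (hj : j < B.card) : (T.card.choose i : F) = 0 := by
  by_contra hne
  set f : MvPolynomial (Fin 2) F :=
    ∏ c ∈ T, ((MvPolynomial.X 0 + MvPolynomial.X 1) - MvPolynomial.C c) with hf
  let d : Fin 2 →₀ ℕ := Finsupp.equivFunOnFinite.symm ![i, j]
  have hd0 : d 0 = i := rfl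
  have hd1 : d 1 = j := rfl
  have hc : f.coeff d ≠ 0 := by
    rw [hf, cd_coeff T d (by rw [hd0, hd1, hij]), hd0]
    exact hne
  have hdd : d.degree = T.card := by
    rw [Finsupp.degree_eq_sum, Fin.sum_univ_two, hd0, hd1, hij]
  have hle : f.totalDegree ≤ T.card := by
    refine (MvPolynomial.totalDegree_finsetProd _ _).trans ?_
    refine (Finset.sum_le_card_nsmul _ _ 1 ?_).trans (by simp)
    intro c _
    refine (MvPolynomial.totalDegree_sub _ _).trans ?_
    refine max_le ((MvPolynomial.totalDegree_add _ _).trans ?_) (by simp)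
    simp
  have hge : d.degree ≤ f.totalDegree := by
    by_contra h
    exact hc (MvPolynomial.coeff_eq_zero_of_totalDegree_lt (not_le.mp h))
  obtain ⟨s, hs, hev⟩ := MvPolynomial.combinatorial_nullstellensatz_exists_eval_nonzero f d hc
    (le_antisymm (hdd ▸ hle) hge) ![A, B] (by
      intro x
      fin_cases x
      · exact hi
      · exact hj)
  apply hev
  rw [hf, map_prod]
  refine Finset.prod_eq_zero (hT _ (hs 0) _ (hs 1)) ?_
  simp

/-- Cauchy–Davenport type bound for `(ℤ/(p))^k`. -/
theorem cauchy_davenport_vector_space (p : ℕ) (hp : p.Prime) (k : ℕ)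
    (hk : 0 < k) (A B : Finset (Fin k → ZMod p))
    (hA : A.Nonempty) (hB : B.Nonempty) :
    betaP p A.card B.card ≤ (A + B).card := by
  classical
  have : Fact p.Prime := ⟨hp⟩
  apply Nat.sInf_le
  intro m h1 h2
  by_cases hm : m ≤ (A + B).card
  swap
  · rw [Nat.choose_eq_zero_of_lt (not_le.mp hm)]
    exact dvd_zero p
  let e : (Fin k → ZMod p) ≃ₗ[ZMod p] GaloisField p k :=
    LinearEquiv.ofFinrankEq _ _ (by rw [GaloisField.finrank p hk.ne']; simp)
  have hcard : ∀ S : Finset (Fin k → ZMod p), (S.image e).card = S.card :=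
    fun S => Finset.card_image_of_injective _ e.injective
  have key := cd_field (A.image e) (B.image e) ((A + B).image e) (by
    intro a ha b hb
    obtain ⟨a, ha1, rfl⟩ := Finset.mem_image.mp ha
    obtain ⟨b, hb1, rfl⟩ := Finset.mem_image.mp hb
    rw [← map_add]
    exact Finset.mem_image_of_mem _ (Finset.add_mem_add ha1 hb1))
    ((A + B).card - m) m (by rw [hcard]; omega) (by rw [hcard]; omega) (by rw [hcard]; exact h2)
  rw [hcard, Nat.choose_symm hm] at key
  exact (CharP.cast_eq_zero_iff (GaloisField p k) p _).mp key
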